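/- (Embedding theorem, interpolating vector field part) Let ε = sup_{(P,q)∈D} max(|∂_P S(P,q)|, |∂_q S(P,q)|). If m = ⌊δ/(6eε) − d⌋ ≥ 1, then: every point of D₁ has at least m well-defined forward iterates under f lying in D; the interpolating vector field X_m(x) = Σ_{k=1}^m ((−1)^{k−1}/k) Δ_k(x) is analytic on D₁ with ‖X_m‖_{D₁} ≤ 2ε; and its time-one flow map Φ_{X_m} satisfies ‖Φ_{X_m} − f‖_{D₀} ≤ 3 e^{d+1} ε · exp(−δ/(6eε)). -/

import Mathlib

/-- Complex phase space `ℂ^d × ℂ^d ≅ ℂ^{2d}` with the sup norm. -/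
abbrev CPhase (d : ℕ) := (Fin d → ℂ) × (Fin d → ℂ)

/-- Partial gradient `∂_P S` of `S` in the first block of `d` variables. -/
noncomputable def pGrad (d : ℕ) (S : CPhase d → ℂ) (x : CPhase d) : Fin d → ℂ :=
  fun i => fderiv ℂ S x (Pi.single i 1, 0)

/-- Partial gradient `∂_q S` of `S` in the second block of `d` variables. -/
noncomputable def qGrad (d : ℕ) (S : CPhase d → ℂ) (x : CPhase d) : Fin d → ℂ :=
  fun i => fderiv ℂ S x (0, Pi.single i 1)

/-- Newton finite differences of a map `f`: `Δ₀(x) = x`,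
`Δ_k(x) = Δ_{k−1}(f(x)) − Δ_{k−1}(x)`. -/
def finDiff {α : Type*} [AddCommGroup α] (f : α → α) : ℕ → α → α
  | 0, x => x
  | k + 1, x => finDiff f k (f x) - finDiff f k x

/-- The interpolating vector field of order `m`:
`X_m(x) = Σ_{k=1}^m ((−1)^{k−1}/k) Δ_k(x)`. -/
noncomputable def interpVF (d : ℕ) (f : CPhase d → CPhase d) (m : ℕ) (x : CPhase d) :
    CPhase d :=
  ∑ k ∈ Finset.Icc 1 m, ((-1 : ℂ) ^ (k - 1) / k) • finDiff f k x

/-!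
Put `f_μ = id + μ (f - id)`. The differences `Δ_k` of `f_μ` are of order `μ ^ k`, and the Newton
polynomial `y(t) = ∑_{k ≤ m} C(t, k) Δ_k(x)` interpolates the iterates `f_μ^[j] x`, `j = 0, …, m`.
The field `X_m` is the velocity of `y` at `t = 0`, and up to `O(μ ^ (m + 1))` the Newton polynomial
of `f_μ^[j] x` is `t ↦ y(t + j)`, so the defect `y' - X_m(y)` is `O(μ ^ (m + 1))` at `t = 0, …, m`.
The Taylor coefficient of `μ ^ n` in the defect is a polynomial in `t` of degree at most `n`, so the
defect is `O(μ ^ (m + 1))` at every `t`. It is bounded by `3 ρ ε` for `‖μ‖ < ρ = 9e/8`, and the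
Schwarz lemma bounds it by `3 ε ρ ^ (-m)` at `μ = 1`. Since `X_m` is Lipschitz with constant `2/9`
by a Cauchy estimate, Gronwall's inequality turns this into a bound on the distance between the
time-one flow of `X_m` and `y(1) = f(x)`.
-/

namespace NewtonEmbedding

open Asymptotics Filter Function Metric Set Topology

section FiniteDifferences

theorem dist_iterate_le {α : Type*} [PseudoMetricSpace α] {f : α → α} {U : Set α} {ε r : ℝ}
    (hε : 0 ≤ ε) (hfε : ∀ y ∈ U, dist (f y) y ≤ ε) {x : α} (hb : ball x r ⊆ U) {k : ℕ}
    (hk : k * ε < r) : dist (f^[k] x) x ≤ k * ε := by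
  induction k with
  | zero => simp
  | succ k ih =>
    push_cast at hk ⊢
    have hkx : dist (f^[k] x) x ≤ k * ε := ih (by linarith)
    rw [iterate_succ_apply']
    calc dist (f (f^[k] x)) x ≤ dist (f (f^[k] x)) (f^[k] x) + dist (f^[k] x) x :=
          dist_triangle _ _ _
      _ ≤ ε + k * ε := add_le_add (hfε _ (hb (mem_ball.2 (by linarith)))) hkx
      _ = (k + 1) * ε := by ring

theorem analyticAt_finDiff_family {𝕜 P V : Type*} [NontriviallyNormedField 𝕜]
    [NormedAddCommGroup P] [NormedSpace 𝕜 P] [NormedAddCommGroup V] [NormedSpace 𝕜 V]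
    {g : P → V → V} {μ : P} {y : V} {k : ℕ}
    (hg : ∀ j < k, AnalyticAt 𝕜 (uncurry g) (μ, (g μ)^[j] y)) :
    AnalyticAt 𝕜 (fun p : P × V => finDiff (g p.1) k p.2) (μ, y) := by
  induction k generalizing y with
  | zero => exact analyticAt_snd
  | succ k ih =>
    have hgy : AnalyticAt 𝕜 (fun p : P × V => (p.1, g p.1 p.2)) (μ, y) :=
      analyticAt_fst.prod (hg 0 k.succ_pos)
    exact (AnalyticAt.fun_comp (x := (μ, y)) (ih fun j hj => hg (j + 1) (by lia)) hgy).sub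
      (ih fun j hj => hg j (by lia))

variable {V : Type*} [NormedAddCommGroup V] [NormedSpace ℂ V] {f : V → V} {U : Set V} {ε r : ℝ}
  {y : V}

theorem analyticAt_finDiff (hf : AnalyticOnNhd ℂ f U) (hε : 0 ≤ ε)
    (hfε : ∀ y ∈ U, dist (f y) y ≤ ε) (hb : ball y r ⊆ U) {k : ℕ} (hk : k * ε < r) :
    AnalyticAt ℂ (finDiff f k) y := by
  refine (analyticAt_finDiff_family (g := fun _ : ℂ => f) (μ := 0) fun j hj => ?_).along_snd
  have hjk : (j : ℝ) * ε ≤ k * ε := by gcongr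
  have hjy := dist_iterate_le hε hfε hb (hjk.trans_lt hk)
  exact (hf _ (hb (mem_ball.2 (by linarith)))).fun_comp analyticAt_snd

-- Cauchy estimates on balls of radius `σ`: each difference costs a factor `2 * ε / σ`.
theorem norm_finDiff_succ_le (hf : AnalyticOnNhd ℂ f U) (hε : 0 ≤ ε)
    (hfε : ∀ y ∈ U, dist (f y) y ≤ ε) {σ : ℝ} (hεσ : ε < σ) {k : ℕ}
    (hb : ball y ((k + 1) * σ) ⊆ U) : ‖finDiff f (k + 1) y‖ ≤ ε * (2 * ε / σ) ^ k := by
  have hσ : 0 < σ := hε.trans_lt hεσ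
  induction k generalizing y with
  | zero => simpa [finDiff, dist_eq_norm] using hfε y (hb (mem_ball_self (by simpa)))
  | succ k ih =>
    set M := ε * (2 * ε / σ) ^ k
    push_cast at hb
    have hball : ∀ w ∈ ball y σ, ball w ((k + 1) * σ) ⊆ U := fun w hw =>
      (ball_subset_ball' (by rw [mem_ball] at hw; linarith)).trans hb
    have hkσ : ((k + 1 : ℕ) : ℝ) * ε < (k + 1) * σ := by push_cast; gcongr
    have hdiff : DifferentiableOn ℂ (finDiff f (k + 1)) (ball y σ) := fun w hw =>
      (analyticAt_finDiff hf hε hfε (hball w hw) hkσ).differentiableWithinAt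
    have hmaps : MapsTo (finDiff f (k + 1)) (ball y σ)
        (closedBall (finDiff f (k + 1) y) (2 * M)) := fun w hw => by
      rw [mem_closedBall, two_mul]
      exact (dist_le_norm_add_norm _ _).trans
        (add_le_add (ih (hball w hw)) (ih (hball y (mem_ball_self hσ))))
    have hfy : dist (f y) y ≤ ε := hfε y (hb (mem_ball_self (by positivity)))
    calc ‖finDiff f (k + 1 + 1) y‖ = dist (finDiff f (k + 1) (f y)) (finDiff f (k + 1) y) :=
          (dist_eq_norm _ _).symm
      _ ≤ 2 * M / σ * dist (f y) y :=
          Complex.dist_le_div_mul_dist_of_mapsTo_ball hdiff hmaps (hfy.trans_lt hεσ)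
      _ ≤ 2 * M / σ * ε := by gcongr
      _ = ε * (2 * ε / σ) ^ (k + 1) := by ring

end FiniteDifferences

section IdHomotopy

variable {V : Type*} [NormedAddCommGroup V] [NormedSpace ℂ V] {f : V → V} {U : Set V} {ε r : ℝ}
  {x : V} {μ : ℂ}

/-- The affine homotopy `id + μ (f - id)` from the identity (`μ = 0`) to `f` (`μ = 1`), with
complex parameter. -/
def idHomotopy (f : V → V) (μ : ℂ) (y : V) : V := AffineMap.lineMap y (f y) μ

@[simp]
theorem idHomotopy_one (f : V → V) : idHomotopy f 1 = f :=
  funext fun _ => AffineMap.lineMap_apply_one _ _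

theorem dist_idHomotopy_le (hfε : ∀ y ∈ U, dist (f y) y ≤ ε) (μ : ℂ) :
    ∀ y ∈ U, dist (idHomotopy f μ y) y ≤ ‖μ‖ * ε := fun y hy => by
  rw [idHomotopy, dist_lineMap_left, dist_comm]
  gcongr
  exact hfε y hy

theorem analyticAt_uncurry_idHomotopy (hf : AnalyticAt ℂ f x) (μ : ℂ) :
    AnalyticAt ℂ (uncurry (idHomotopy f)) (μ, x) := by
  have hfx : AnalyticAt ℂ (fun p : ℂ × V => f p.2) (μ, x) :=
    AnalyticAt.fun_comp (x := (μ, x)) hf analyticAt_snd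
  simp only [uncurry_def, idHomotopy, AffineMap.lineMap_apply_module']
  exact (analyticAt_fst.smul (hfx.sub analyticAt_snd)).add analyticAt_snd

theorem analyticOnNhd_idHomotopy (hf : AnalyticOnNhd ℂ f U) (μ : ℂ) :
    AnalyticOnNhd ℂ (idHomotopy f μ) U := fun y hy =>
  (analyticAt_uncurry_idHomotopy (hf y hy) μ).along_snd

theorem analyticAt_finDiff_idHomotopy (hf : AnalyticOnNhd ℂ f U) (hε : 0 ≤ ε)
    (hfε : ∀ y ∈ U, dist (f y) y ≤ ε) (hb : ball x r ⊆ U) {k : ℕ} (hk : k * (‖μ‖ * ε) < r) :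
    AnalyticAt ℂ (fun p : ℂ × V => finDiff (idHomotopy f p.1) k p.2) (μ, x) := by
  refine analyticAt_finDiff_family fun j hj => analyticAt_uncurry_idHomotopy (hf _ (hb ?_)) μ
  have hjk : j * (‖μ‖ * ε) < r := lt_of_le_of_lt (by gcongr) hk
  exact (dist_iterate_le (by positivity) (dist_idHomotopy_le hfε μ) hb hjk).trans_lt hjk

theorem isBigO_finDiff_succ_idHomotopy (hf : AnalyticOnNhd ℂ f U) (hε : 0 ≤ ε)
    (hfε : ∀ y ∈ U, dist (f y) y ≤ ε) (hx : U ∈ 𝓝 x) (k i : ℕ) :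
    (fun μ => finDiff (idHomotopy f μ) (k + 1) ((idHomotopy f μ)^[i] x)) =O[𝓝 0]
      fun μ : ℂ => μ ^ (k + 1) := by
  obtain ⟨r, hr, hb⟩ := Metric.mem_nhds_iff.1 hx
  set σ := r / (k + 2) with hσ
  have hσ0 : 0 < σ := by positivity
  have hσr : (k + 1) * σ + σ = r := by rw [hσ]; field_simp; ring
  have hsmall : ∀ᶠ μ : ℂ in 𝓝 0, (i + 1) * (‖μ‖ * ε) < σ :=
    ((by fun_prop : Continuous fun μ : ℂ => (i + 1) * (‖μ‖ * ε)).tendsto' 0 0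
      (by simp)).eventually_lt_const hσ0
  refine IsBigO.of_bound (ε * (2 * ε / σ) ^ k) (hsmall.mono fun μ hμ => ?_)
  have hμε : 0 ≤ ‖μ‖ * ε := by positivity
  have hiμε : 0 ≤ i * (‖μ‖ * ε) := by positivity
  have hfμ := dist_idHomotopy_le hfε μ
  have hiter : dist ((idHomotopy f μ)^[i] x) x ≤ σ :=
    (dist_iterate_le hμε hfμ hb (by nlinarith)).trans (by linarith)
  calc ‖finDiff (idHomotopy f μ) (k + 1) ((idHomotopy f μ)^[i] x)‖
      ≤ ‖μ‖ * ε * (2 * (‖μ‖ * ε) / σ) ^ k :=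
        norm_finDiff_succ_le (analyticOnNhd_idHomotopy hf μ) hμε hfμ (by linarith)
          ((ball_subset_ball' (by linarith)).trans hb)
    _ = ε * (2 * ε / σ) ^ k * ‖μ ^ (k + 1)‖ := by rw [norm_pow]; ring

end IdHomotopy
section OrderOfVanishing

theorem isBigO_norm_pow_iff_of_hasFPowerSeriesAt {𝕜 E F : Type*} [NontriviallyNormedField 𝕜]
    [NormedAddCommGroup E] [NormedSpace 𝕜 E] [NormedAddCommGroup F] [NormedSpace 𝕜 F]
    {h : E → F} {p : FormalMultilinearSeries 𝕜 E F} (hp : HasFPowerSeriesAt h p 0) {N : ℕ} :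
    h =O[𝓝 0] (fun y => ‖y‖ ^ N) ↔ ∀ n < N, ∀ y, p n (fun _ => y) = 0 := by
  have htaylor : ∀ n, (fun y => h y - p.partialSum n y) =O[𝓝 0] fun y => ‖y‖ ^ n := fun n => by
    simpa only [zero_add] using hp.isBigO_sub_partialSum_pow n
  constructor
  · intro hN n
    induction n using Nat.strong_induction_on with | _ n ih
    intro hn
    have hsum : ∀ y, p.partialSum (n + 1) y = p n fun _ => y := fun y => by
      rw [FormalMultilinearSeries.partialSum, Finset.sum_range_succ,
        Finset.sum_eq_zero fun k hk => ih k (Finset.mem_range.1 hk)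
          ((Finset.mem_range.1 hk).trans hn) y, zero_add]
    have hNn : h =O[𝓝 0] fun y => ‖y‖ ^ (n + 1) :=
      hN.trans <| (Nat.succ_le_of_lt hn).eq_or_lt.elim (fun h => h ▸ isBigO_refl _ _)
        fun h => (isLittleO_norm_pow_norm_pow h).isBigO
    refine IsBigO.continuousMultilinearMap_apply_eq_zero
      ((hNn.sub (htaylor (n + 1))).congr_left fun y => ?_)
    rw [sub_sub_cancel, hsum]
  · intro h0
    refine (htaylor N).congr_left fun y => ?_
    rw [FormalMultilinearSeries.partialSum, Finset.sum_eq_zero fun n hn =>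
      h0 n (Finset.mem_range.1 hn) y, sub_zero]

theorem multilinearMap_smul_add_eq_zero {K E F ι : Type*} [Field K] [AddCommGroup E] [Module K E]
    [AddCommGroup F] [Module K F] [Fintype ι] (p : MultilinearMap K (fun _ : ι => E) F) {v w : E}
    {s : Finset K} (hs : Fintype.card ι < s.card) (h0 : ∀ τ ∈ s, p (fun _ => τ • v + w) = 0)
    (t : K) : p (fun _ => t • v + w) = 0 := by
  classical
  have hexpand : ∀ τ : K, p (fun _ => τ • v + w) =
      ∑ a : Finset ι, τ ^ a.card • p (a.piecewise (fun _ => v) (fun _ => w)) := fun τ => by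
    refine (p.map_add_univ (fun _ => τ • v) (fun _ => w)).trans (Finset.sum_congr rfl fun a _ => ?_)
    rw [← Finset.prod_const, ← p.map_piecewise_smul]
    congr 1
    ext i
    by_cases hi : i ∈ a <;> simp [hi]
  refine (Module.forall_dual_apply_eq_zero_iff K _).1 fun φ => ?_
  let q : Polynomial K := ∑ a : Finset ι,
    Polynomial.monomial a.card (φ (p (a.piecewise (fun _ => v) (fun _ => w))))
  have hq : ∀ τ, q.eval τ = φ (p (fun _ => τ • v + w)) := fun τ => by
    simp only [q, hexpand, Polynomial.eval_finsetSum, Polynomial.eval_monomial, map_sum, map_smul,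
      smul_eq_mul, mul_comm]
  have hdeg : q.natDegree ≤ Fintype.card ι := Polynomial.natDegree_sum_le_of_forall_le _ _
    fun a _ => (Polynomial.natDegree_monomial_le _).trans (Finset.card_le_univ a)
  have hq0 : q = 0 := Polynomial.eq_zero_of_natDegree_lt_card_of_eval_eq_zero' q s
    (fun τ hτ => by rw [hq, h0 τ hτ, map_zero]) (hdeg.trans_lt hs)
  rw [← hq, hq0, Polynomial.eval_zero]

variable {E V : Type*} [NormedAddCommGroup E] [NormedSpace ℂ E] [NormedAddCommGroup V]
  [NormedSpace ℂ V]

theorem isBigO_comp_smul_iff_of_hasFPowerSeriesAt {G : E → V}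
    {p : FormalMultilinearSeries ℂ E V} (hp : HasFPowerSeriesAt G p 0) (u : E) {N : ℕ} :
    (fun μ : ℂ => G (μ • u)) =O[𝓝 0] (fun μ => μ ^ N) ↔ ∀ n < N, p n (fun _ => u) = 0 := by
  have hline : HasFPowerSeriesAt (fun μ : ℂ => G (μ • u))
      (p.compContinuousLinearMap (ContinuousLinearMap.toSpanSingleton ℂ u)) 0 :=
    HasFPowerSeriesAt.compContinuousLinearMap (u := ContinuousLinearMap.toSpanSingleton ℂ u)
      (by simpa using hp)
  rw [← isBigO_norm_right]
  simp only [norm_pow, isBigO_norm_pow_iff_of_hasFPowerSeriesAt hline,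
    FormalMultilinearSeries.compContinuousLinearMap_apply, Function.comp_def,
    ContinuousLinearMap.toSpanSingleton_apply]
  refine forall₂_congr fun n _ => ⟨fun h => by simpa using h 1, fun h μ => ?_⟩
  rw [(p n).map_smul_univ (fun _ => μ) (fun _ => u), h, smul_zero]

theorem isBigO_comp_smul_of_forall_mem {G : E → V} (hG : AnalyticAt ℂ G 0) {v w : E} {m : ℕ}
    {s : Finset ℂ} (hs : m < s.card)
    (h : ∀ τ ∈ s, (fun μ : ℂ => G (μ • (τ • v + w))) =O[𝓝 0] fun μ => μ ^ (m + 1)) (t : ℂ) :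
    (fun μ : ℂ => G (μ • (t • v + w))) =O[𝓝 0] fun μ => μ ^ (m + 1) := by
  obtain ⟨p, hp⟩ := hG
  simp only [isBigO_comp_smul_iff_of_hasFPowerSeriesAt hp] at h ⊢
  exact fun n hn => multilinearMap_smul_add_eq_zero (p n).toMultilinearMap
    (by rw [Fintype.card_fin]; lia) (fun τ hτ => h τ hτ n hn) t

theorem exists_eq_pow_smul_of_isBigO [CompleteSpace V] {h : ℂ → V} (ha : AnalyticAt ℂ h 0) {k : ℕ}
    (hk : h =O[𝓝 0] fun z => z ^ k) :
    ∃ a : ℂ → V, AnalyticAt ℂ a 0 ∧ ∀ᶠ z in 𝓝 0, h z = z ^ k • a z := by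
  obtain ⟨p, r, hp⟩ := id ha
  have hcoeff := (isBigO_norm_pow_iff_of_hasFPowerSeriesAt hp.hasFPowerSeriesAt).1
    (by simpa only [norm_pow] using hk.norm_right)
  have hderiv : ∀ i < k, iteratedDeriv i h 0 = 0 := fun i hi => by
    rw [iteratedDeriv_eq_iteratedFDeriv, ← hp.factorial_smul, hcoeff i hi, smul_zero]
  simpa using (natCast_le_analyticOrderAt ha).1
    ((natCast_le_analyticOrderAt_iff_iteratedDeriv_eq_zero ha).2 hderiv)

theorem norm_le_mul_div_pow_of_isBigO {h : E → V} {R M : ℝ} {n : ℕ}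
    (hd : DifferentiableOn ℂ h (ball 0 R)) (hM : ∀ z ∈ ball (0 : E) R, ‖h z‖ ≤ M)
    (ho : h =O[𝓝 0] fun z => ‖z‖ ^ (n + 1)) {z : E} (hz : z ∈ ball (0 : E) R) :
    ‖h z‖ ≤ M * (‖z‖ / R) ^ (n + 1) := by
  have h0 : h 0 = 0 := IsBigO.eq_zero_of_norm_pow (by simpa using ho) n.succ_ne_zero
  have hlittle : (fun w => h w - h 0) =o[𝓝 0] fun w => ‖w - 0‖ ^ n := by
    simpa [h0] using ho.trans_isLittleO (isLittleO_norm_pow_norm_pow n.lt_succ_self)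
  simpa [h0] using Complex.dist_le_mul_div_pow_of_mapsTo_ball_of_isLittleO hd
    (fun w hw => by simpa [h0] using hM w hw) hlittle hz

end OrderOfVanishing

section ChoosePoly

open Polynomial Nat

/-- The binomial coefficient `t ↦ t (t - 1) ⋯ (t - k + 1) / k!` as a polynomial. -/
noncomputable def choosePoly (k : ℕ) : ℂ[X] := C (k ! : ℂ)⁻¹ * descPochhammer ℂ k

@[simp]
theorem choosePoly_zero : choosePoly 0 = 1 := by simp [choosePoly]

theorem choosePoly_succ (k : ℕ) :
    choosePoly (k + 1) = C ((k : ℂ) + 1)⁻¹ * (choosePoly k * (X - (k : ℂ[X]))) := by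
  rw [choosePoly, choosePoly, descPochhammer_succ_right, factorial_succ, Nat.cast_mul, mul_inv,
    C_mul, Nat.cast_succ]
  ring

theorem natDegree_choosePoly_le (k : ℕ) : (choosePoly k).natDegree ≤ k :=
  (natDegree_C_mul_le _ _).trans (descPochhammer_natDegree ℂ k).le

theorem eval_choosePoly (t : ℂ) (k : ℕ) : (choosePoly k).eval t = Ring.choose t k := by
  have h := Ring.descPochhammer_eq_factorial_smul_choose t k
  rw [← aeval_eq_smeval, aeval_def, eval₂_eq_eval_map, descPochhammer_map, nsmul_eq_mul] at h
  rw [choosePoly, eval_C_mul, h, inv_mul_cancel_left₀ (cast_ne_zero.2 k.factorial_ne_zero)]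

theorem eval_natCast_choosePoly (j k : ℕ) : (choosePoly k).eval (j : ℂ) = j.choose k := by
  rw [eval_choosePoly, Ring.choose_natCast]

theorem choosePoly_succ_comp_X_add_one (k : ℕ) :
    (choosePoly (k + 1)).comp (X + 1) = choosePoly (k + 1) + choosePoly k :=
  funext fun t => by simp [eval_choosePoly, Ring.choose_succ_succ, add_comm]

theorem eval_choosePoly_succ_add_one (t : ℂ) (k : ℕ) :
    (choosePoly (k + 1)).eval (t + 1) = (choosePoly (k + 1)).eval t + (choosePoly k).eval t := by
  simpa using congr_arg (Polynomial.eval t) (choosePoly_succ_comp_X_add_one k)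

theorem eval_derivative_choosePoly_succ_add_one (t : ℂ) (k : ℕ) :
    (derivative (choosePoly (k + 1))).eval (t + 1) =
      (derivative (choosePoly (k + 1))).eval t + (derivative (choosePoly k)).eval t := by
  simpa [derivative_comp] using
    congr_arg (fun p => Polynomial.eval t (derivative p)) (choosePoly_succ_comp_X_add_one k)

theorem eval_choosePoly_succ (t : ℂ) (k : ℕ) :
    (choosePoly (k + 1)).eval t = (choosePoly k).eval t * (t - k) / (k + 1 : ℕ) := by
  simp [choosePoly_succ, div_eq_inv_mul]

theorem eval_derivative_choosePoly_succ (t : ℂ) (k : ℕ) :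
    (derivative (choosePoly (k + 1))).eval t =
      ((derivative (choosePoly k)).eval t * (t - k) + (choosePoly k).eval t) / (k + 1 : ℕ) := by
  rw [choosePoly_succ, derivative_C_mul]
  simp [div_eq_inv_mul]

theorem eval_zero_derivative_choosePoly_succ (k : ℕ) :
    (derivative (choosePoly (k + 1))).eval 0 = (-1) ^ k / ((k : ℂ) + 1) := by
  induction k with
  | zero => simp [choosePoly_succ]
  | succ k ih =>
    have hk : (k : ℂ) + 1 ≠ 0 := Nat.cast_add_one_ne_zero k
    have h0 : (choosePoly (k + 1)).eval 0 = 0 := by simpa using eval_natCast_choosePoly 0 (k + 1)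
    rw [eval_derivative_choosePoly_succ, ih, h0]
    push_cast
    field_simp
    ring

theorem norm_ofReal_sub_natCast {t : ℝ} {k : ℕ} (ht : t ≤ k) : ‖(t : ℂ) - k‖ = k - t := by
  rw [← Complex.ofReal_natCast, ← Complex.ofReal_sub, Complex.norm_real, Real.norm_eq_abs,
    abs_sub_comm, abs_of_nonneg (sub_nonneg.2 ht)]

theorem norm_eval_choosePoly_succ_le {t : ℝ} (ht : t ∈ Icc (0 : ℝ) 1) (k : ℕ) :
    ‖(choosePoly (k + 1)).eval (t : ℂ)‖ ≤ t / (k + 1) := by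
  induction k with
  | zero => simp [eval_choosePoly_succ, abs_of_nonneg ht.1]
  | succ k ih =>
    have hkt : t ≤ (k + 1 : ℕ) := ht.2.trans (by simp)
    rw [eval_choosePoly_succ, norm_div, norm_mul, norm_ofReal_sub_natCast hkt,
      Complex.norm_natCast, Nat.cast_succ (k + 1)]
    gcongr
    calc _ ≤ t / (k + 1) * (k + 1) :=
          mul_le_mul ih (by push_cast; linarith [ht.1]) (sub_nonneg.2 hkt)
            (div_nonneg ht.1 (by positivity))
      _ = t := by field_simp

theorem norm_eval_derivative_choosePoly_succ_le {t : ℝ} (ht : t ∈ Icc (0 : ℝ) 1) (k : ℕ) :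
    ‖(derivative (choosePoly (k + 1))).eval (t : ℂ)‖ ≤ 1 / (k + 1) := by
  induction k with
  | zero => simp [eval_derivative_choosePoly_succ]
  | succ k ih =>
    have hkt : t ≤ (k + 1 : ℕ) := ht.2.trans (by simp)
    rw [eval_derivative_choosePoly_succ, norm_div, Complex.norm_natCast, Nat.cast_succ (k + 1)]
    gcongr
    calc _ ≤ 1 / (k + 1) * ((k + 1 : ℕ) - t) + t / (k + 1) := by
          refine norm_add_le_of_le ?_ (norm_eval_choosePoly_succ_le ht k)
          rw [norm_mul, norm_ofReal_sub_natCast hkt]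
          exact mul_le_mul_of_nonneg_right ih (sub_nonneg.2 hkt)
      _ = 1 := by push_cast; field_simp; ring

theorem exists_analyticAt_homogenization {k : ℕ} {P : ℂ[X]} (hP : P.natDegree ≤ k) :
    ∃ H : ℂ × ℂ → ℂ, AnalyticAt ℂ H 0 ∧ ∀ t μ, H (t * μ, μ) = μ ^ k * P.eval t := by
  refine ⟨fun p => ∑ i ∈ Finset.range (k + 1), P.coeff i * p.1 ^ i * p.2 ^ (k - i),
    Finset.analyticAt_fun_sum _ fun i _ => (analyticAt_const.mul (analyticAt_fst.pow i)).mul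
      (analyticAt_snd.pow (k - i)), fun t μ => ?_⟩
  rw [eval_eq_sum_range' (Nat.lt_succ_of_le hP), Finset.mul_sum]
  refine Finset.sum_congr rfl fun i hi => ?_
  rw [← Nat.add_sub_of_le (Finset.mem_range_succ_iff.1 hi), pow_add, Nat.add_sub_cancel_left]
  ring

end ChoosePoly

section NewtonSums

open Polynomial

variable {V : Type*} [NormedAddCommGroup V] [NormedSpace ℂ V] {f : V → V} {U : Set V} {ε r : ℝ}
  {x : V} {μ : ℂ} {c : ℕ → ℂ} {m : ℕ}

/-- The Newton sum `∑_{k ≤ m} c k • Δ_k` with coefficients `c`. -/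
def newtonSum (c : ℕ → ℂ) (f : V → V) (m : ℕ) (x : V) : V :=
  ∑ k ∈ Finset.range (m + 1), c k • finDiff f k x

/-- The Newton polynomial `t ↦ ∑_{k ≤ m} C(t, k) Δ_k(x)` interpolating `j ↦ f^[j] x` at
`0, …, m`, evaluated at `t`. -/
noncomputable def newtonInterp (f : V → V) (m : ℕ) (t : ℂ) : V → V :=
  newtonSum (fun k => (choosePoly k).eval t) f m

/-- The `t`-derivative of the Newton polynomial `newtonInterp f m t`. -/
noncomputable def newtonVelocity (f : V → V) (m : ℕ) (t : ℂ) : V → V :=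
  newtonSum (fun k => (derivative (choosePoly k)).eval t) f m

/-- The interpolating vector field `∑_{k = 1}^m ((-1)^{k-1} / k) Δ_k` of order `m` of a
self-map of a complex normed space; `interpVF d` is the case of `CPhase d`. -/
noncomputable def interpField (f : V → V) (m : ℕ) (x : V) : V :=
  ∑ k ∈ Finset.Icc 1 m, ((-1 : ℂ) ^ (k - 1) / k) • finDiff f k x

theorem newtonSum_eq_add_sum (c : ℕ → ℂ) (f : V → V) (m : ℕ) (x : V) :
    newtonSum c f m x = c 0 • x + ∑ k ∈ Finset.range m, c (k + 1) • finDiff f (k + 1) x := by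
  rw [newtonSum, Finset.sum_range_succ', add_comm, finDiff]

theorem newtonSum_eq_newtonSum_apply_sub {c' : ℕ → ℂ} (h0 : c' 0 = c 0)
    (hsucc : ∀ k, c' (k + 1) = c (k + 1) + c k) (f : V → V) (m : ℕ) (x : V) :
    newtonSum c' f m x = newtonSum c f m (f x) - c m • finDiff f (m + 1) x := by
  unfold newtonSum
  induction m with
  | zero => simp [h0, finDiff, smul_sub]
  | succ m ih =>
    have hΔ : finDiff f (m + 1) (f x) = finDiff f (m + 1 + 1) x + finDiff f (m + 1) x :=
      (sub_add_cancel _ _).symm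
    rw [Finset.sum_range_succ, ih, Finset.sum_range_succ _ (m + 1), hsucc, hΔ, add_smul, smul_add]
    abel

theorem newtonInterp_add_one (f : V → V) (m : ℕ) (t : ℂ) (x : V) :
    newtonInterp f m (t + 1) x =
      newtonInterp f m t (f x) - (choosePoly m).eval t • finDiff f (m + 1) x :=
  newtonSum_eq_newtonSum_apply_sub (by simp) (eval_choosePoly_succ_add_one t) f m x

theorem newtonVelocity_add_one (f : V → V) (m : ℕ) (t : ℂ) (x : V) :
    newtonVelocity f m (t + 1) x =
      newtonVelocity f m t (f x) - (derivative (choosePoly m)).eval t • finDiff f (m + 1) x :=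
  newtonSum_eq_newtonSum_apply_sub (by simp) (eval_derivative_choosePoly_succ_add_one t) f m x

theorem newtonInterp_zero (f : V → V) (m : ℕ) (x : V) : newtonInterp f m 0 x = x := by
  have h0 : ∀ k, (choosePoly (k + 1)).eval 0 = 0 := fun k => by
    simpa using eval_natCast_choosePoly 0 (k + 1)
  simp [newtonInterp, newtonSum_eq_add_sum, h0]

theorem newtonInterp_natCast {j : ℕ} (hj : j ≤ m) (f : V → V) (x : V) :
    newtonInterp f m j x = f^[j] x := by
  induction j generalizing x with
  | zero => simp [newtonInterp_zero]
  | succ j ih =>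
    rw [Nat.cast_succ, newtonInterp_add_one, eval_natCast_choosePoly, Nat.choose_eq_zero_of_lt hj,
      Nat.cast_zero, zero_smul, sub_zero, ih (Nat.le_of_succ_le hj), iterate_succ_apply]

theorem newtonVelocity_zero (f : V → V) (m : ℕ) : newtonVelocity f m 0 = interpField f m := by
  funext x
  rw [newtonVelocity, newtonSum_eq_add_sum, interpField, Finset.range_eq_Ico,
    Finset.sum_Ico_add' (fun k => (derivative (choosePoly k)).eval 0 • finDiff f k x), zero_add]
  rw [choosePoly_zero, derivative_one, eval_zero, zero_smul, zero_add]
  refine Finset.sum_congr rfl fun k hk => ?_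
  obtain ⟨k, rfl⟩ := Nat.exists_eq_add_of_le' (Finset.mem_Icc.1 hk).1
  simp [eval_zero_derivative_choosePoly_succ]

theorem hasDerivAt_newtonInterp (f : V → V) (m : ℕ) (x : V) (t : ℂ) :
    HasDerivAt (fun t => newtonInterp f m t x) (newtonVelocity f m t x) t := by
  unfold newtonInterp newtonVelocity newtonSum
  exact HasDerivAt.fun_sum fun k _ => ((choosePoly k).hasDerivAt t).smul_const _

theorem analyticAt_newtonSum_idHomotopy (hf : AnalyticOnNhd ℂ f U) (hε : 0 ≤ ε)
    (hfε : ∀ y ∈ U, dist (f y) y ≤ ε) (hb : ball x r ⊆ U) (hm : m * (‖μ‖ * ε) < r) (c : ℕ → ℂ) :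
    AnalyticAt ℂ (fun p : ℂ × V => newtonSum c (idHomotopy f p.1) m p.2) (μ, x) := by
  refine Finset.analyticAt_fun_sum _ fun k hk => analyticAt_const.smul
    (analyticAt_finDiff_idHomotopy hf hε hfε hb (lt_of_le_of_lt ?_ hm))
  have hkm := Finset.mem_range_succ_iff.1 hk
  gcongr

theorem sum_half_pow_div_le (m : ℕ) :
    ∑ k ∈ Finset.range m, (1 / 2 : ℝ) ^ k / (k + 1) ≤ 3 / 2 := by
  have hlog : HasSum (fun k : ℕ => (1 / 2 : ℝ) ^ k / (k + 1)) (2 * Real.log 2) := by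
    have h := (Real.hasSum_pow_div_log_of_abs_lt_one (x := 1 / 2) (by norm_num [abs_lt])).mul_left 2
    rw [show (1 : ℝ) - 1 / 2 = 2⁻¹ by norm_num, Real.log_inv, neg_neg] at h
    exact h.congr_fun fun k => by ring
  exact (sum_le_hasSum _ (fun k _ => by positivity) hlog).trans (by linarith [Real.log_two_lt_d9])

theorem norm_newtonSum_sub_le (hf : AnalyticOnNhd ℂ f U) (hε : 0 < ε)
    (hfε : ∀ y ∈ U, dist (f y) y ≤ ε) (hc : ∀ k, ‖c (k + 1)‖ ≤ 1 / (k + 1))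
    (hb : ball x (m * (4 * ε)) ⊆ U) : ‖newtonSum c f m x - c 0 • x‖ ≤ 3 / 2 * ε := by
  have hΔ : ∀ k < m, ‖finDiff f (k + 1) x‖ ≤ ε * (1 / 2) ^ k := fun k hk => by
    have hkm : ((k : ℝ) + 1) * (4 * ε) ≤ m * (4 * ε) := by gcongr; exact_mod_cast hk
    refine (norm_finDiff_succ_le hf hε.le hfε (by linarith)
      ((ball_subset_ball hkm).trans hb)).trans_eq ?_
    congr 2
    field_simp
    norm_num
  rw [newtonSum_eq_add_sum, add_sub_cancel_left]
  calc ‖∑ k ∈ Finset.range m, c (k + 1) • finDiff f (k + 1) x‖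
      ≤ ∑ k ∈ Finset.range m, (1 / 2 : ℝ) ^ k / (k + 1) * ε := norm_sum_le_of_le _ fun k hk => by
        rw [norm_smul, div_eq_inv_mul, ← one_div, mul_assoc, mul_comm _ ε]
        exact mul_le_mul (hc k) (hΔ k (Finset.mem_range.1 hk)) (norm_nonneg _) (by positivity)
    _ ≤ 3 / 2 * ε := by
        rw [← Finset.sum_mul]
        gcongr
        exact sum_half_pow_div_le m

theorem norm_newtonVelocity_le (hf : AnalyticOnNhd ℂ f U) (hε : 0 < ε)
    (hfε : ∀ y ∈ U, dist (f y) y ≤ ε) (hb : ball x (m * (4 * ε)) ⊆ U) {t : ℝ}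
    (ht : t ∈ Icc (0 : ℝ) 1) : ‖newtonVelocity f m t x‖ ≤ 3 / 2 * ε := by
  simpa [newtonVelocity] using norm_newtonSum_sub_le
    (c := fun k => (derivative (choosePoly k)).eval (t : ℂ)) hf hε hfε
    (norm_eval_derivative_choosePoly_succ_le ht) hb

theorem dist_newtonInterp_le (hf : AnalyticOnNhd ℂ f U) (hε : 0 < ε)
    (hfε : ∀ y ∈ U, dist (f y) y ≤ ε) (hb : ball x (m * (4 * ε)) ⊆ U) {t : ℝ}
    (ht : t ∈ Icc (0 : ℝ) 1) : dist (newtonInterp f m t x) x ≤ 3 / 2 * ε := by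
  have hc : ∀ k, ‖(choosePoly (k + 1)).eval (t : ℂ)‖ ≤ 1 / (k + 1) := fun k =>
    (norm_eval_choosePoly_succ_le ht k).trans (by have := ht.2; gcongr)
  simpa [newtonInterp, dist_eq_norm] using
    norm_newtonSum_sub_le (c := fun k => (choosePoly k).eval (t : ℂ)) hf hε hfε hc hb

end NewtonSums

section NewtonDefect

open Polynomial

variable {V : Type*} [NormedAddCommGroup V] [NormedSpace ℂ V] {f : V → V} {U : Set V} {ε : ℝ}
  {x : V} {μ : ℂ} {m : ℕ}

/-- The defect at time `t` of the Newton polynomial `newtonInterp f m · x` as a solution of the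
differential equation `y' = interpField f m y`. -/
noncomputable def newtonDefect (f : V → V) (m : ℕ) (t : ℂ) (x : V) : V :=
  newtonVelocity f m t x - interpField f m (newtonInterp f m t x)

-- Raising `j` by one applies `f` and adds a multiple of `Δ_{m+1}`, of order `m + 1` in `μ`.
theorem isBigO_newtonVelocity_natCast_sub (hf : AnalyticOnNhd ℂ f U) (hε : 0 ≤ ε)
    (hfε : ∀ y ∈ U, dist (f y) y ≤ ε) (hx : U ∈ 𝓝 x) (m j i : ℕ) :
    (fun μ => newtonVelocity (idHomotopy f μ) m j ((idHomotopy f μ)^[i] x) -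
      interpField (idHomotopy f μ) m ((idHomotopy f μ)^[j + i] x)) =O[𝓝 0]
      fun μ : ℂ => μ ^ (m + 1) := by
  induction j generalizing i with
  | zero => simpa [newtonVelocity_zero] using isBigO_zero _ _
  | succ j ih =>
    refine ((ih (i + 1)).sub ((isBigO_finDiff_succ_idHomotopy hf hε hfε hx m i).const_smul_left
      ((derivative (choosePoly m)).eval (j : ℂ)))).congr_left fun μ => ?_
    rw [Nat.cast_succ, newtonVelocity_add_one, ← iterate_succ_apply' (idHomotopy f μ) i,
      Nat.succ_add_eq_add_succ, Pi.smul_apply, sub_right_comm]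

theorem isBigO_newtonDefect_natCast (hf : AnalyticOnNhd ℂ f U) (hε : 0 ≤ ε)
    (hfε : ∀ y ∈ U, dist (f y) y ≤ ε) (hx : U ∈ 𝓝 x) {j : ℕ} (hj : j ≤ m) :
    (fun μ => newtonDefect (idHomotopy f μ) m j x) =O[𝓝 0] fun μ : ℂ => μ ^ (m + 1) := by
  simpa [newtonDefect, newtonInterp_natCast hj] using
    isBigO_newtonVelocity_natCast_sub hf hε hfε hx m j 0

theorem isBigO_finDiff_idHomotopy (hf : AnalyticOnNhd ℂ f U) (hε : 0 ≤ ε)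
    (hfε : ∀ y ∈ U, dist (f y) y ≤ ε) (hx : U ∈ 𝓝 x) (k : ℕ) :
    (fun μ => finDiff (idHomotopy f μ) k x) =O[𝓝 0] fun μ : ℂ => μ ^ k := by
  cases k with
  | zero => simpa [finDiff] using isBigO_const_const x (one_ne_zero (α := ℂ)) (𝓝 (0 : ℂ))
  | succ k => exact isBigO_finDiff_succ_idHomotopy hf hε hfε hx k 0

theorem analyticAt_finDiff_idHomotopy_zero (hf : AnalyticOnNhd ℂ f U) (hε : 0 ≤ ε)
    (hfε : ∀ y ∈ U, dist (f y) y ≤ ε) (hx : U ∈ 𝓝 x) (k : ℕ) :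
    AnalyticAt ℂ (fun μ => finDiff (idHomotopy f μ) k x) 0 := by
  obtain ⟨r, hr, hb⟩ := Metric.mem_nhds_iff.1 hx
  exact (analyticAt_finDiff_idHomotopy hf hε hfε hb (by simpa)).along_fst

theorem exists_analyticAt_newtonSum_idHomotopy [CompleteSpace V] (hf : AnalyticOnNhd ℂ f U)
    (hε : 0 ≤ ε) (hfε : ∀ y ∈ U, dist (f y) y ≤ ε) (hx : U ∈ 𝓝 x) {P : ℕ → ℂ[X]}
    (hP : ∀ k, (P k).natDegree ≤ k) (m : ℕ) :
    ∃ F : ℂ × ℂ → V, AnalyticAt ℂ F 0 ∧ ∀ t : ℂ, ∀ᶠ μ in 𝓝 0,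
      F (t * μ, μ) = newtonSum (fun k => (P k).eval t) (idHomotopy f μ) m x := by
  choose H hHa hH using fun k => exists_analyticAt_homogenization (hP k)
  choose a ha hΔ using fun k => exists_eq_pow_smul_of_isBigO
    (analyticAt_finDiff_idHomotopy_zero hf hε hfε hx k) (isBigO_finDiff_idHomotopy hf hε hfε hx k)
  refine ⟨fun p => ∑ k ∈ Finset.range (m + 1), H k p • a k p.2,
    Finset.analyticAt_fun_sum _ fun k _ => (hHa k).smul
      (AnalyticAt.fun_comp (f := Prod.snd) (ha k) analyticAt_snd), fun t => ?_⟩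
  have hΔ' : ∀ᶠ μ in 𝓝 0, ∀ k ∈ Finset.range (m + 1),
      finDiff (idHomotopy f μ) k x = μ ^ k • a k μ :=
    (Finset.eventually_all _).2 fun k _ => hΔ k
  filter_upwards [hΔ'] with μ hμ
  refine Finset.sum_congr rfl fun k hk => ?_
  rw [hμ k hk, hH, smul_smul, mul_comm]

theorem isBigO_newtonDefect [CompleteSpace V] (hf : AnalyticOnNhd ℂ f U) (hε : 0 ≤ ε)
    (hfε : ∀ y ∈ U, dist (f y) y ≤ ε) (hx : U ∈ 𝓝 x) (m : ℕ) (t : ℂ) :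
    (fun μ => newtonDefect (idHomotopy f μ) m t x) =O[𝓝 0] fun μ : ℂ => μ ^ (m + 1) := by
  obtain ⟨Y, hYa, hY⟩ :=
    exists_analyticAt_newtonSum_idHomotopy hf hε hfε hx natDegree_choosePoly_le m
  obtain ⟨W, hWa, hW⟩ := exists_analyticAt_newtonSum_idHomotopy hf hε hfε hx
    (fun k => ((natDegree_derivative_le _).trans (Nat.sub_le _ 1)).trans
      (natDegree_choosePoly_le k)) m
  have hY0 : Y 0 = x := by
    simpa [← newtonInterp.eq_def, newtonInterp_zero, ← Prod.zero_eq_mk] using (hY 0).self_of_nhds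
  -- In the variables `(t μ, μ)` the defects at all times `t` are one analytic function `G`.
  let G : ℂ × ℂ → V := fun p => W p - newtonVelocity (idHomotopy f p.2) m 0 (Y p)
  have hGa : AnalyticAt ℂ G 0 := by
    obtain ⟨r, hr, hb⟩ := Metric.mem_nhds_iff.1 hx
    refine hWa.sub (AnalyticAt.fun_comp
      (g := fun p : ℂ × V => newtonVelocity (idHomotopy f p.1) m 0 p.2) ?_
      (analyticAt_snd.prod hYa))
    rw [hY0]
    exact analyticAt_newtonSum_idHomotopy hf hε hfε hb (by simpa) _
  have hG : ∀ t : ℂ, (fun μ : ℂ => G (μ • (t • ((1, 0) : ℂ × ℂ) + (0, 1)))) =ᶠ[𝓝 0]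
      fun μ => newtonDefect (idHomotopy f μ) m t x := fun t => by
    filter_upwards [hY t, hW t] with μ hYμ hWμ
    simp only [G, newtonDefect, newtonInterp, newtonVelocity, ← newtonVelocity_zero]
    simp [mul_comm μ, hYμ, hWμ]
  let s : Finset ℂ := (Finset.range (m + 1)).map Nat.castEmbedding
  refine (isBigO_comp_smul_of_forall_mem hGa (s := s) (by simp [s]) (fun τ hτ => ?_) t).congr'
    (hG t) EventuallyEq.rfl
  obtain ⟨j, hj, rfl⟩ := Finset.mem_map.1 hτ
  exact (isBigO_newtonDefect_natCast hf hε hfε hx (Finset.mem_range_succ_iff.1 hj)).congr'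
    (hG j).symm EventuallyEq.rfl

theorem ball_newtonInterp_subset (hf : AnalyticOnNhd ℂ f U) (hε : 0 < ε)
    (hfε : ∀ y ∈ U, dist (f y) y ≤ ε) (hb : ball x (m * (4 * ε) + 2 * ε) ⊆ U) {t : ℝ}
    (ht : t ∈ Icc (0 : ℝ) 1) : ball (newtonInterp f m t x) (m * (4 * ε) + ε / 2) ⊆ U := by
  have hdist := dist_newtonInterp_le hf hε hfε ((ball_subset_ball (by linarith)).trans hb) ht
  exact (ball_subset_ball' (by linarith)).trans hb

theorem norm_interpField_le (hf : AnalyticOnNhd ℂ f U) (hε : 0 < ε)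
    (hfε : ∀ y ∈ U, dist (f y) y ≤ ε) (hb : ball x (m * (4 * ε)) ⊆ U) :
    ‖interpField f m x‖ ≤ 3 / 2 * ε := by
  simpa [newtonVelocity_zero] using
    norm_newtonVelocity_le hf hε hfε hb (left_mem_Icc.2 zero_le_one)

theorem norm_newtonDefect_le (hf : AnalyticOnNhd ℂ f U) (hε : 0 < ε)
    (hfε : ∀ y ∈ U, dist (f y) y ≤ ε) (hb : ball x (m * (4 * ε) + 2 * ε) ⊆ U) {t : ℝ}
    (ht : t ∈ Icc (0 : ℝ) 1) : ‖newtonDefect f m t x‖ ≤ 3 * ε := by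
  have hvel := norm_newtonVelocity_le hf hε hfε ((ball_subset_ball (by linarith)).trans hb) ht
  have hfield := norm_interpField_le (m := m) hf hε hfε
    ((ball_subset_ball (by linarith)).trans (ball_newtonInterp_subset hf hε hfε hb ht))
  exact (norm_sub_le_of_le hvel hfield).trans_eq (by ring)

theorem analyticAt_newtonDefect_idHomotopy (hf : AnalyticOnNhd ℂ f U) (hε : 0 ≤ ε)
    (hfε : ∀ y ∈ U, dist (f y) y ≤ ε) {η : ℝ} (hη : 0 < η) (hμ : ‖μ‖ * ε ≤ η)
    (hb : ball x (m * (4 * η) + 2 * η) ⊆ U) {t : ℝ} (ht : t ∈ Icc (0 : ℝ) 1) :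
    AnalyticAt ℂ (fun μ => newtonDefect (idHomotopy f μ) m t x) μ := by
  have hfμ : ∀ y ∈ U, dist (idHomotopy f μ y) y ≤ η := fun y hy =>
    (dist_idHomotopy_le hfε μ y hy).trans hμ
  have hmη : m * (‖μ‖ * ε) ≤ m * (4 * η) :=
    mul_le_mul_of_nonneg_left (by linarith) m.cast_nonneg
  have hsum : ∀ c, AnalyticAt ℂ (fun μ => newtonSum c (idHomotopy f μ) m x) μ := fun c =>
    (analyticAt_newtonSum_idHomotopy hf hε hfε hb (by linarith) c).along_fst
  have hfield : AnalyticAt ℂ (fun p : ℂ × V => newtonVelocity (idHomotopy f p.1) m 0 p.2)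
      (μ, newtonInterp (idHomotopy f μ) m t x) :=
    analyticAt_newtonSum_idHomotopy hf hε hfε
      (ball_newtonInterp_subset (analyticOnNhd_idHomotopy hf μ) hη hfμ hb ht) (by linarith) _
  simp only [newtonDefect, ← newtonVelocity_zero]
  exact (hsum _).sub (AnalyticAt.fun_comp
    (g := fun p : ℂ × V => newtonVelocity (idHomotopy f p.1) m 0 p.2)
    (f := fun μ => (μ, newtonInterp (idHomotopy f μ) m t x)) hfield (analyticAt_id.prod (hsum _)))

theorem norm_newtonDefect_le_mul_pow [CompleteSpace V] (hf : AnalyticOnNhd ℂ f U) (hε : 0 < ε)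
    (hfε : ∀ y ∈ U, dist (f y) y ≤ ε) {ρ : ℝ} (hρ : 1 < ρ)
    (hb : ball x (m * (4 * (ρ * ε)) + 2 * (ρ * ε)) ⊆ U) {t : ℝ} (ht : t ∈ Icc (0 : ℝ) 1) :
    ‖newtonDefect f m t x‖ ≤ 3 * (ρ * ε) * (1 / ρ) ^ (m + 1) := by
  have hρε : 0 < ρ * ε := mul_pos (one_pos.trans hρ) hε
  have hμ : ∀ μ ∈ ball (0 : ℂ) ρ, ‖μ‖ * ε ≤ ρ * ε := fun μ hμ => by
    gcongr
    exact (mem_ball_zero_iff.1 hμ).le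
  have hx : U ∈ 𝓝 x := mem_of_superset (ball_mem_nhds x (by positivity)) hb
  simpa using norm_le_mul_div_pow_of_isBigO (z := (1 : ℂ))
    (h := fun μ => newtonDefect (idHomotopy f μ) m t x)
    (fun μ h => (analyticAt_newtonDefect_idHomotopy hf hε.le hfε hρε (hμ μ h) hb
      ht).differentiableWithinAt)
    (fun μ h => norm_newtonDefect_le (analyticOnNhd_idHomotopy hf μ) hρε
      (fun y hy => (dist_idHomotopy_le hfε μ y hy).trans (hμ μ h)) hb ht)
    (by simpa using (isBigO_newtonDefect hf hε.le hfε hx m t).norm_right) (by simpa)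

end NewtonDefect

section IntegralCurves

theorem lipschitzOnWith_closedBall_of_norm_le {V W : Type*} [NormedAddCommGroup V]
    [NormedSpace ℂ V] [NormedAddCommGroup W] [NormedSpace ℂ W] {X : V → W} {x : V} {r R M : ℝ}
    {K : NNReal} (hX : DifferentiableOn ℂ X (ball x R)) (hM : ∀ y ∈ ball x R, ‖X y‖ ≤ M)
    (hrR : r < R) (hK : 2 * M / (R - r) ≤ K) : LipschitzOnWith K X (closedBall x r) := by
  have hsub : ∀ y ∈ closedBall x r, ball y (R - r) ⊆ ball x R := fun y hy =>
    ball_subset_ball' (by rw [mem_closedBall] at hy; linarith)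
  have hmem : ∀ y ∈ closedBall x r, y ∈ ball x R := fun y hy =>
    hsub y hy (mem_ball_self (sub_pos.2 hrR))
  refine (convex_closedBall x r).lipschitzOnWith_of_nnnorm_fderiv_le (𝕜 := ℂ)
    (fun y hy => hX.differentiableAt (isOpen_ball.mem_nhds (hmem y hy))) fun y hy => ?_
  have hmaps : MapsTo X (ball y (R - r)) (closedBall (X y) (2 * M)) := fun z hz => by
    rw [mem_closedBall, two_mul]
    exact (dist_le_norm_add_norm _ _).trans (add_le_add (hM z (hsub y hy hz)) (hM y (hmem y hy)))
  exact_mod_cast (Complex.norm_fderiv_le_div_of_mapsTo_ball (hX.mono (hsub y hy)) hmaps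
    (sub_pos.2 hrR)).trans hK

variable {E : Type*} [NormedAddCommGroup E] [NormedSpace ℝ E]

-- Mathlib's Picard–Lindelöf theorem, keeping the information that the solution stays in the ball.
theorem exists_hasDerivWithinAt_mem_closedBall_of_isPicardLindelof [CompleteSpace E]
    {v : ℝ → E → E} {tmin tmax : ℝ} {t₀ : Icc tmin tmax} {x : E} {a L K : NNReal}
    (hv : IsPicardLindelof v t₀ x a 0 L K) :
    ∃ γ : ℝ → E, γ t₀ = x ∧ ∀ t ∈ Icc tmin tmax,
      γ t ∈ closedBall x a ∧ HasDerivWithinAt γ (v t (γ t)) (Icc tmin tmax) t := by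
  obtain ⟨γ, hγ⟩ := ODE.FunSpace.exists_isFixedPt_next hv (mem_closedBall_self le_rfl)
  have hball : ∀ t, γ.compProj t ∈ closedBall x a := fun t =>
    γ.compProj_mem_closedBall hv.mul_max_le
  have hpicard : EqOn γ.compProj (ODE.picard v t₀ x γ.compProj) (Icc tmin tmax) := fun t ht => by
    nth_rw 1 [← hγ]
    rw [ODE.FunSpace.compProj_of_mem ht, ODE.FunSpace.next_apply]
  refine ⟨γ.compProj, by rw [ODE.FunSpace.compProj_val, ← hγ, ODE.FunSpace.next_apply₀],
    fun t ht => ⟨hball t, ?_⟩⟩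
  exact (ODE.hasDerivWithinAt_picard_Icc t₀.2 hv.continuousOn_uncurry
    γ.continuous_compProj.continuousOn (fun t _ => hball t) x ht).congr_of_mem hpicard ht

theorem exists_hasDerivAt_mem_closedBall [CompleteSpace E] {X : E → E} {x : E} {a M T : ℝ}
    {K : NNReal} (hX : LipschitzOnWith K X (closedBall x a)) (hM : ∀ y ∈ closedBall x a, ‖X y‖ ≤ M)
    (ha : 0 ≤ a) (hT : 0 ≤ T) (hMT : M * T ≤ a) :
    ∃ γ : ℝ → E, γ 0 = x ∧ ∀ t ∈ Ioo (-T) T, γ t ∈ closedBall x a ∧ HasDerivAt γ (X (γ t)) t := by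
  have hM0 : 0 ≤ M := (norm_nonneg _).trans (hM x (mem_closedBall_self ha))
  lift a to NNReal using ha
  lift M to NNReal using hM0
  have hPL : IsPicardLindelof (fun _ => X) (⟨0, by simpa⟩ : Icc (-T) T) x a 0 M K :=
    .of_time_independent hM hX (by simpa using hMT)
  obtain ⟨γ, hγ0, hγ⟩ := exists_hasDerivWithinAt_mem_closedBall_of_isPicardLindelof hPL
  refine ⟨γ, hγ0, fun t ht => ?_⟩
  obtain ⟨hmem, hderiv⟩ := hγ t (Ioo_subset_Icc_self ht)
  exact ⟨hmem, hderiv.hasDerivAt (Icc_mem_nhds ht.1 ht.2)⟩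

theorem dist_integralCurve_one_le {X : E → E} {s : Set E} {K : NNReal} {c : ℝ} {γ g g' : ℝ → E}
    (hX : LipschitzOnWith K X s) (hK : K ≠ 0)
    (hγ : ∀ t ∈ Icc (0 : ℝ) 1, γ t ∈ s ∧ HasDerivAt γ (X (γ t)) t)
    (hgs : ∀ t ∈ Icc (0 : ℝ) 1, g t ∈ s) (hg : ∀ t ∈ Icc (0 : ℝ) 1, HasDerivAt g (g' t) t)
    (hc : ∀ t ∈ Icc (0 : ℝ) 1, ‖g' t - X (g t)‖ ≤ c) (h0 : γ 0 = g 0) :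
    dist (γ 1) (g 1) ≤ c / K * (Real.exp K - 1) := by
  have hIco : ∀ t ∈ Ico (0 : ℝ) 1, t ∈ Icc (0 : ℝ) 1 := fun _ ht => Ico_subset_Icc_self ht
  simpa [gronwallBound_of_K_ne_0 (NNReal.coe_ne_zero.2 hK)] using
    dist_le_of_approx_trajectories_ODE_of_mem (v := fun _ => X) (s := fun _ => s) (δ := 0)
      (f' := fun t => X (γ t)) (εf := 0) (εg := c) (fun _ _ => hX)
      (fun t ht => (hγ t ht).2.continuousAt.continuousWithinAt)
      (fun t ht => (hγ t (hIco t ht)).2.hasDerivWithinAt) (fun t _ => by simp)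
      (fun t ht => (hγ t (hIco t ht)).1)
      (fun t ht => (hg t ht).continuousAt.continuousWithinAt)
      (fun t ht => (hg t (hIco t ht)).hasDerivWithinAt)
      (fun t ht => by rw [dist_eq_norm]; exact hc t (hIco t ht))
      (fun t ht => hgs t (hIco t ht)) (by rw [h0, dist_self]) 1 (right_mem_Icc.2 zero_le_one)

end IntegralCurves

section Embedding

theorem nine_halves_mul_exp_sub_one_le : 9 / 2 * (Real.exp (2 / 9) - 1) ≤ 9 / 8 := by
  have h := Real.exp_bound' (x := 2 / 9) (by norm_num) (by norm_num) (n := 3) (by norm_num)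
  norm_num [Finset.sum_range_succ, Nat.factorial] at h
  linarith

variable {V : Type*} [NormedAddCommGroup V] [NormedSpace ℂ V] {f : V → V} {U : Set V} {ε : ℝ}
  {x : V} {m : ℕ}

theorem analyticAt_interpField (hf : AnalyticOnNhd ℂ f U) (hε : 0 ≤ ε)
    (hfε : ∀ y ∈ U, dist (f y) y ≤ ε) {r : ℝ} (hb : ball x r ⊆ U) (hm : m * ε < r) :
    AnalyticAt ℂ (interpField f m) x :=
  Finset.analyticAt_fun_sum _ fun k hk => analyticAt_const.smul <|
    analyticAt_finDiff hf hε hfε hb <| hm.trans_le' <| by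
      have hkm := (Finset.mem_Icc.1 hk).2
      gcongr

theorem lipschitzOnWith_interpField (hf : AnalyticOnNhd ℂ f U) (hε : 0 < ε)
    (hfε : ∀ y ∈ U, dist (f y) y ≤ ε) (hb : ball x (m * (4 * ε) + 16 * ε) ⊆ U) :
    LipschitzOnWith (2 / 9) (interpField f m) (closedBall x (9 / 4 * ε)) := by
  have hball : ∀ y ∈ ball x (16 * ε), ball y (m * (4 * ε) + (16 * ε - dist y x)) ⊆ U :=
    fun y _ => (ball_subset_ball' (by linarith)).trans hb
  have hmε : m * ε ≤ m * (4 * ε) := by gcongr; linarith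
  refine lipschitzOnWith_closedBall_of_norm_le (R := 16 * ε) (M := 3 / 2 * ε)
    (fun y hy => ?_) (fun y hy => ?_) (by linarith) ?_
  · rw [mem_ball] at hy
    exact (analyticAt_interpField hf hε.le hfε (hball y hy)
      (by linarith)).differentiableAt.differentiableWithinAt
  · rw [mem_ball] at hy
    exact norm_interpField_le hf hε hfε ((ball_subset_ball (by linarith)).trans (hball y hy))
  · rw [NNReal.coe_div, NNReal.coe_ofNat, NNReal.coe_ofNat, div_le_div_iff₀ (by linarith) (by simp)]
    linarith

theorem exists_integralCurve_interpField [CompleteSpace V] (hf : AnalyticOnNhd ℂ f U) (hε : 0 < ε)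
    (hfε : ∀ y ∈ U, dist (f y) y ≤ ε) (hb : ball x (m * (4 * ε) + 16 * ε) ⊆ U) :
    ∃ γ : ℝ → V, γ 0 = x ∧ ∀ t ∈ Icc (0 : ℝ) 1,
      γ t ∈ closedBall x (9 / 4 * ε) ∧ HasDerivAt γ (interpField f m (γ t)) t := by
  obtain ⟨γ, hγ0, hγ⟩ := exists_hasDerivAt_mem_closedBall (M := 3 / 2 * ε) (T := 3 / 2)
    (lipschitzOnWith_interpField hf hε hfε hb)
    (fun y hy => norm_interpField_le hf hε hfε
      ((ball_subset_ball' (by rw [mem_closedBall] at hy; linarith)).trans hb))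
    (by positivity) (by norm_num) (by linarith)
  exact ⟨γ, hγ0, fun t ht => hγ t ⟨by linarith [ht.1], by linarith [ht.2]⟩⟩

theorem hasDerivAt_newtonInterp_ofReal (f : V → V) (m : ℕ) (x : V) (t : ℝ) :
    HasDerivAt (fun t : ℝ => newtonInterp f m t x) (newtonVelocity f m t x) t := by
  simpa [Function.comp_def] using (hasDerivAt_newtonInterp f m x t).scomp t
    (Complex.ofRealCLM.hasDerivAt (x := t))

theorem dist_integralCurve_interpField_le (hf : AnalyticOnNhd ℂ f U) (hε : 0 < ε)
    (hfε : ∀ y ∈ U, dist (f y) y ≤ ε) (hb : ball x (m * (4 * ε) + 16 * ε) ⊆ U) (hm : 1 ≤ m)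
    {γ : ℝ → V} (hγ0 : γ 0 = x) (hγ : ∀ t ∈ Icc (0 : ℝ) 1,
      γ t ∈ closedBall x (9 / 4 * ε) ∧ HasDerivAt γ (interpField f m (γ t)) t) {c : ℝ}
    (hc : ∀ t ∈ Icc (0 : ℝ) 1, ‖newtonDefect f m t x‖ ≤ c) : dist (γ 1) (f x) ≤ 9 / 8 * c := by
  have hc0 : 0 ≤ c := (norm_nonneg _).trans (hc 0 (left_mem_Icc.2 zero_le_one))
  have hball : ball x (m * (4 * ε)) ⊆ U := (ball_subset_ball (by linarith)).trans hb
  have hone : newtonInterp f m ((1 : ℝ) : ℂ) x = f x := by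
    simpa using newtonInterp_natCast hm f x
  have hgronwall := dist_integralCurve_one_le (g := fun t : ℝ => newtonInterp f m t x)
    (g' := fun t : ℝ => newtonVelocity f m t x) (lipschitzOnWith_interpField hf hε hfε hb)
    (by norm_num) hγ
    (fun t ht => (dist_newtonInterp_le hf hε hfε hball ht).trans (by linarith))
    (fun t _ => hasDerivAt_newtonInterp_ofReal f m x t) hc
    (by simp [hγ0, newtonInterp_zero])
  rw [hone] at hgronwall
  calc dist (γ 1) (f x) ≤ c * (9 / 2 * (Real.exp (2 / 9) - 1)) :=
        hgronwall.trans_eq (by push_cast; ring)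
    _ ≤ c * (9 / 8) := by gcongr; exact nine_halves_mul_exp_sub_one_le
    _ = 9 / 8 * c := mul_comm _ _

-- The radius `ρ = 9e/8` compensates the Gronwall factor `9/8`.
theorem norm_newtonDefect_le_exp [CompleteSpace V] (hf : AnalyticOnNhd ℂ f U) (hε : 0 < ε)
    (hfε : ∀ y ∈ U, dist (f y) y ≤ ε) (hb : ball x (9 / 2 * Real.exp 1 * ε * (m + 1)) ⊆ U)
    (hm : 1 ≤ m) {t : ℝ} (ht : t ∈ Icc (0 : ℝ) 1) :
    ‖newtonDefect f m t x‖ ≤ 8 / 9 * (3 * ε * Real.exp (-m)) := by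
  have hexp : 1 < Real.exp 1 := Real.one_lt_exp_iff.2 one_pos
  set ρ := 9 / 8 * Real.exp 1 with hρ
  have hρ1 : 1 < ρ := by linarith
  have hρε : 0 < ρ * ε := by positivity
  have hρinv : 1 / ρ = 8 / 9 * Real.exp (-1) := by rw [hρ, Real.exp_neg]; field_simp
  calc ‖newtonDefect f m t x‖ ≤ 3 * (ρ * ε) * (1 / ρ) ^ (m + 1) :=
        norm_newtonDefect_le_mul_pow hf hε hfε hρ1
          ((ball_subset_ball (by rw [hρ] at hρε ⊢; linarith)).trans hb) ht
    _ = (8 / 9) ^ m * (3 * ε * Real.exp (-m)) := by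
        have hρ0 : ρ ≠ 0 := (zero_lt_one.trans hρ1).ne'
        have hpow : (1 / ρ) ^ m = (8 / 9) ^ m * Real.exp (-m) := by
          rw [hρinv, mul_pow, ← Real.exp_nat_mul, mul_neg_one]
        calc 3 * (ρ * ε) * (1 / ρ) ^ (m + 1) = 3 * ε * (1 / ρ) ^ m := by rw [pow_succ]; field_simp
          _ = (8 / 9) ^ m * (3 * ε * Real.exp (-m)) := by rw [hpow]; ring
    _ ≤ 8 / 9 * (3 * ε * Real.exp (-m)) := by
        gcongr
        exact pow_le_of_le_one (by norm_num) (by norm_num) (by lia)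

theorem exists_integralCurve_interpField_dist_le [CompleteSpace V] (hf : AnalyticOnNhd ℂ f U)
    (hε : 0 < ε) (hfε : ∀ y ∈ U, dist (f y) y ≤ ε)
    (hb : ball x (9 / 2 * Real.exp 1 * ε * (m + 1)) ⊆ U) (hm : 1 ≤ m) :
    ∃ γ : ℝ → V, γ 0 = x ∧ (∀ t ∈ Icc (0 : ℝ) 1,
      γ t ∈ closedBall x (9 / 4 * ε) ∧ HasDerivAt γ (interpField f m (γ t)) t) ∧
      dist (γ 1) (f x) ≤ 3 * ε * Real.exp (-m) := by
  have hmε : ε ≤ m * ε := le_mul_of_one_le_left hε.le (by exact_mod_cast hm)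
  have hexp : 5 / 2 * (ε * (m + 1)) ≤ Real.exp 1 * (ε * (m + 1)) := by
    have := Real.exp_one_gt_d9
    gcongr
    linarith
  have hb' : ball x (m * (4 * ε) + 16 * ε) ⊆ U :=
    (ball_subset_ball (by linarith)).trans hb
  obtain ⟨γ, hγ0, hγ⟩ := exists_integralCurve_interpField hf hε hfε hb'
  exact ⟨γ, hγ0, hγ, (dist_integralCurve_interpField_le hf hε hfε hb' hm hγ0 hγ fun t ht =>
    norm_newtonDefect_le_exp hf hε hfε hb hm ht).trans_eq (by ring)⟩

theorem mul_natCast_add_one_le_of_eq_floor {c d δ : ℝ} (hc : 0 < c) (hd : 1 ≤ d)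
    (hm : (m : ℤ) = ⌊δ / c - d⌋) : c * (m + 1) ≤ δ := by
  have hle : (m : ℝ) ≤ δ / c - d := by exact_mod_cast Int.le_floor.1 hm.le
  exact (le_div_iff₀' hc).1 (by linarith)

theorem exp_neg_natCast_le_of_eq_floor {a d : ℝ} (hm : (m : ℤ) = ⌊a - d⌋) :
    Real.exp (-m) ≤ Real.exp (d + 1) * Real.exp (-a) := by
  have hlt : a - d < m + 1 := by exact_mod_cast Int.floor_lt.1 (hm.symm.trans_lt (lt_add_one _))
  rw [← Real.exp_add, Real.exp_le_exp]
  linarith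

theorem mul_le_of_six_mul_exp_one_mul_le {δ : ℝ} (hε : 0 < ε)
    (hδ : 6 * Real.exp 1 * ε * (m + 1) ≤ δ) : 16 * ε * (m + 1) ≤ δ := by
  have hexp : 16 ≤ 6 * Real.exp 1 := by linarith [Real.exp_one_gt_d9]
  exact hδ.trans' (by gcongr)

theorem ball_subset_thickening_three_quarters {α : Type*} [PseudoMetricSpace α] {D₀ : Set α}
    {δ r : ℝ} {x : α} (hδ : 0 ≤ δ) (hx : x ∈ cthickening (δ / 2) D₀) (hr : r ≤ δ / 4) :
    ball x r ⊆ thickening (3 * δ / 4) D₀ :=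
  calc ball x r ⊆ thickening r (cthickening (δ / 2) D₀) := ball_subset_thickening hx r
    _ ⊆ thickening (r + δ / 2) D₀ := thickening_cthickening_subset r (by positivity) D₀
    _ ⊆ thickening (3 * δ / 4) D₀ := thickening_mono (by linarith) D₀

end Embedding

end NewtonEmbedding

open NewtonEmbedding

theorem embedding_interpolating_vector_field_general {V : Type*} [NormedAddCommGroup V]
    [NormedSpace ℂ V] [CompleteSpace V] {D₀ : Set V} {δ ε d : ℝ} (hε : 0 < ε) (hd : 1 ≤ d)
    {f : V → V} (hfa : AnalyticOnNhd ℂ f (Metric.thickening (3 * δ / 4) D₀))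
    (hf : ∀ x ∈ Metric.thickening (3 * δ / 4) D₀, dist (f x) x ≤ ε) {m : ℕ} (hm : 1 ≤ m)
    (hmdef : (m : ℤ) = ⌊δ / (6 * Real.exp 1 * ε) - d⌋) :
    (∀ x ∈ Metric.cthickening (δ / 2) D₀, ∀ k ≤ m, f^[k] x ∈ Metric.cthickening δ D₀) ∧
    AnalyticOnNhd ℂ (interpField f m) (Metric.cthickening (δ / 2) D₀) ∧
    (∀ x ∈ Metric.cthickening (δ / 2) D₀, ‖interpField f m x‖ ≤ 3 / 2 * ε) ∧
    ∃ Φ : V → V,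
      (∀ x ∈ D₀, ∃ γ : ℝ → V, γ 0 = x ∧ γ 1 = Φ x ∧ ∀ t ∈ Set.Icc (0 : ℝ) 1,
        γ t ∈ Metric.cthickening (δ / 2) D₀ ∧ HasDerivAt γ (interpField f m (γ t)) t) ∧
      ∀ x ∈ D₀, ‖Φ x - f x‖ ≤
        3 * Real.exp (d + 1) * ε * Real.exp (-δ / (6 * Real.exp 1 * ε)) := by
  have hδ := mul_natCast_add_one_le_of_eq_floor (by positivity) hd hmdef
  have hδ' : 16 * ε * (m + 1) ≤ δ := mul_le_of_six_mul_exp_one_mul_le hε hδ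
  have hmε : ε ≤ m * ε := le_mul_of_one_le_left hε.le (by exact_mod_cast hm)
  have hball : ∀ x ∈ Metric.cthickening (δ / 2) D₀,
      Metric.ball x (m * (4 * ε)) ⊆ Metric.thickening (3 * δ / 4) D₀ := fun x hx =>
    ball_subset_thickening_three_quarters (by linarith) hx (by linarith)
  refine ⟨fun x hx k hk => ?_,
    fun x hx => analyticAt_interpField hfa hε.le hf (hball x hx) (by linarith),
    fun x hx => norm_interpField_le hfa hε hf (hball x hx), ?_⟩
  · have hkε : k * ε < m * (4 * ε) := by
      have : k * ε ≤ m * ε := by gcongr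
      linarith
    exact Metric.thickening_subset_cthickening_of_le (by linarith) D₀
      (hball x hx ((dist_iterate_le hε.le hf (hball x hx) hkε).trans_lt hkε))
  · choose! γ hγ0 hγ hγ1 using fun x (hx : x ∈ D₀) =>
      exists_integralCurve_interpField_dist_le hfa hε hf
        ((Metric.ball_subset_ball (by linarith)).trans (Metric.ball_subset_thickening hx _)) hm
    refine ⟨fun x => γ x 1, fun x hx => ⟨γ x, hγ0 x hx, rfl, fun t ht => ⟨?_, (hγ x hx t ht).2⟩⟩,
      fun x hx => ?_⟩
    · exact Metric.closedBall_subset_cthickening hx _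
        (Metric.closedBall_subset_closedBall (by linarith) (hγ x hx t ht).1)
    · calc ‖γ x 1 - f x‖ ≤ 3 * ε * Real.exp (-m) := (dist_eq_norm _ _).symm.trans_le (hγ1 x hx)
        _ ≤ 3 * ε * (Real.exp (d + 1) * Real.exp (-(δ / (6 * Real.exp 1 * ε)))) := by
          gcongr
          exact exp_neg_natCast_le_of_eq_floor hmdef
        _ = 3 * Real.exp (d + 1) * ε * Real.exp (-δ / (6 * Real.exp 1 * ε)) := by
          rw [neg_div]; ring

theorem dist_le_of_generatingFunction {d : ℕ} {S : CPhase d → ℂ} {ε : ℝ} {x y : CPhase d}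
    (hS : max ‖pGrad d S (y.1, x.2)‖ ‖qGrad d S (y.1, x.2)‖ ≤ ε)
    (hp : x.1 = y.1 + qGrad d S (y.1, x.2)) (hq : y.2 = x.2 + pGrad d S (y.1, x.2)) :
    dist y x ≤ ε := by
  rwa [Prod.dist_eq, dist_comm, dist_eq_norm, dist_eq_norm, sub_eq_of_eq_add' hp,
    sub_eq_of_eq_add' hq, max_comm]

/-- **Embedding theorem, interpolating vector field part.**
`D₀ ⊂ ℂ^{2d}`, `D` its `δ`-neighbourhood, `D₁` its `δ/2`-neighbourhood; `S` analytic on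
`D` with `|∇S| ≤ ε` there, and `f` the symplectic map generated by `P·q + S(P,q)`.
If `m = ⌊δ/(6eε) − d⌋ ≥ 1`, then every point of `D₁` has `m` forward iterates under `f`
lying in `D`, the interpolating vector field `X_m` is analytic on `D₁` with
`‖X_m‖_{D₁} ≤ 2ε`, and its time-one flow map `Φ_{X_m}` satisfies
`‖Φ_{X_m} − f‖_{D₀} ≤ 3 e^{d+1} ε exp(−δ/(6eε))`. -/
theorem embedding_interpolating_vector_field (d : ℕ) (hd : 1 ≤ d)
    (D₀ : Set (CPhase d)) (δ ε : ℝ) (hδ : 0 < δ) (hε : 0 < ε)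
    (D D₁ : Set (CPhase d))
    (hD : D = Metric.cthickening δ D₀)
    (hD₁ : D₁ = Metric.cthickening (δ / 2) D₀)
    (S : CPhase d → ℂ) (hS : AnalyticOnNhd ℂ S D)
    (hεub : ∀ x ∈ D, max ‖pGrad d S x‖ ‖qGrad d S x‖ ≤ ε)
    (f : CPhase d → CPhase d)
    (hfa : AnalyticOnNhd ℂ f (Metric.thickening (3 * δ / 4) D₀))
    (hf : ∀ x ∈ Metric.thickening (3 * δ / 4) D₀,
      ((f x).1, x.2) ∈ D ∧
      x.1 = (f x).1 + qGrad d S ((f x).1, x.2) ∧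
      (f x).2 = x.2 + pGrad d S ((f x).1, x.2))
    (m : ℕ) (hm : 1 ≤ m)
    (hmdef : (m : ℤ) = ⌊δ / (6 * Real.exp 1 * ε) - d⌋) :
    (∀ x ∈ D₁, ∀ k ≤ m, f^[k] x ∈ D) ∧
    AnalyticOnNhd ℂ (interpVF d f m) D₁ ∧
    (∀ x ∈ D₁, ‖interpVF d f m x‖ ≤ 2 * ε) ∧
    ∃ Φ : CPhase d → CPhase d,
      (∀ x ∈ D₀, ∃ γ : ℝ → CPhase d, γ 0 = x ∧ γ 1 = Φ x ∧
        ∀ t ∈ Set.Icc (0 : ℝ) 1, γ t ∈ D₁ ∧ HasDerivAt γ (interpVF d f m (γ t)) t) ∧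
      ∀ x ∈ D₀, ‖Φ x - f x‖ ≤
        3 * Real.exp ((d : ℝ) + 1) * ε * Real.exp (-δ / (6 * Real.exp 1 * ε)) := by
  subst hD hD₁
  obtain ⟨hiter, hanalytic, hbound, hflow⟩ := embedding_interpolating_vector_field_general hε
    (by exact_mod_cast hd) hfa (fun x hx => let ⟨hy, hp, hq⟩ := hf x hx
      dist_le_of_generatingFunction (hεub _ hy) hp hq) hm hmdef
  exact ⟨hiter, hanalytic, fun x hx => (hbound x hx).trans (by linarith), hflow⟩
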